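/- (General propagation case of Proposition 2, proved by induction in Appendix B.) In the attacked noise-free closed loop with x₀ = 0, all reference inputs zero, and all injections zero except the injection at block stage j−1 (1-based block index j), for every block index i with i ≥ j+2 and i ≤ K+1 the attacked data at stage i−1 equals y_{i−1}^a = h̃_{ij} δ_{j−1}, where h̃_{ij} = C_{i−1} [ (∏_{m=1}^{i−(j+1)} (A_{i−m} + B_{i−m} L_{i−m})) B_j L_j + Σ_{c=1}^{i−(j+2)} ( (∏_{m=1}^{c} (A_{i−m} + B_{i−m} L_{i−m})) B_{i−(c+1)} L_{i−(c+1)} (∏_{b=c+2}^{i−j} (I − K_{i−b} C_{i−b}) A_{i−b}) ) + B_{i−1} L_{i−1} (∏_{c=2}^{i−j} (I − K_{i−c} C_{i−c}) A_{i−c}) ] K_j, where in every displayed product the factors are multiplied in order of increasing value of the product index (so stage indices decrease from left to right). -/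

import Mathlib

open Matrix BigOperators

/-- Product of stage-indexed matrix factors `F (lo+1), ..., F hi`, multiplied with
decreasing stage index from left to right: `F hi * F (hi-1) * ... * F (lo+1)`
(the identity matrix when `hi = lo`, a junk zero matrix when `hi < lo`). -/
def chainProd (m : ℕ → ℕ) (F : ∀ k : ℕ, Matrix (Fin (m k)) (Fin (m (k - 1))) ℝ)
    (hi lo : ℕ) : Matrix (Fin (m hi)) (Fin (m lo)) ℝ :=
  if _h : lo < hi then F hi * chainProd m F (hi - 1) lo
  else Matrix.of fun r c => if (r : ℕ) = (c : ℕ) ∧ hi = lo then 1 else 0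
termination_by hi
decreasing_by omega

/-!
The estimation error `x̂ₖ - xₖ` evolves on its own, `eₖ = (1 - Kₖ Cₖ) Aₖ eₖ₋₁ + Kₖ δₖ`, and drives
the plant through `xₖ = (Aₖ + Bₖ Lₖ) xₖ₋₁ + Bₖ Lₖ eₖ₋₁`. Thus the attacked loop is a cascade of two
linear recurrences, and variation of constants, applied first to the error and then to the state,
gives the response to an injection at stage `s` as a sum over the stages `t > s` at which the error
re-enters the plant. The three summands of `h̃ᵢⱼ` are the term with the smallest `t`, those in
between, and the term with the largest `t`.
-/

section chainProd

variable {m m' : ℕ → ℕ}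

theorem chainProd_self (F : ∀ k : ℕ, Matrix (Fin (m k)) (Fin (m (k - 1))) ℝ) (k : ℕ) :
    chainProd m F k k = 1 := by
  rw [chainProd]
  ext r c
  simp [Matrix.one_apply, Fin.ext_iff]

theorem chainProd_eq_mul_of_lt (F : ∀ k : ℕ, Matrix (Fin (m k)) (Fin (m (k - 1))) ℝ) {lo hi : ℕ}
    (h : lo < hi) : chainProd m F hi lo = F hi * chainProd m F (hi - 1) lo := by
  rw [chainProd, dif_pos h]

theorem chainProd_eq_zero_of_lt (F : ∀ k : ℕ, Matrix (Fin (m k)) (Fin (m (k - 1))) ℝ)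
    {lo hi : ℕ} (h : hi < lo) : chainProd m F hi lo = 0 := by
  rw [chainProd, dif_neg h.not_gt]
  ext r c
  simp [h.ne]

theorem variation_of_constants {F : ∀ k : ℕ, Matrix (Fin (m k)) (Fin (m (k - 1))) ℝ}
    {v w : ∀ k : ℕ, Fin (m k) → ℝ} {lo hi : ℕ} (hle : lo ≤ hi)
    (hv : ∀ k ∈ Finset.Ioc lo hi, v k = F k *ᵥ v (k - 1) + w k) :
    v hi = chainProd m F hi lo *ᵥ v lo + ∑ t ∈ Finset.Ioc lo hi, chainProd m F hi t *ᵥ w t := by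
  induction hi using Nat.strong_induction_on with
  | _ hi ih =>
    obtain rfl | hlt := hle.eq_or_lt
    · simp [chainProd_self]
    have hsub : Finset.Ioc lo (hi - 1) ⊆ Finset.Ioc lo hi :=
      Finset.Ioc_subset_Ioc_right (Nat.sub_le hi 1)
    have hprev := ih (hi - 1) (by omega) (by omega) fun k hk => hv k (hsub hk)
    have hIoc : Finset.Ioc lo hi = insert hi (Finset.Ioc lo (hi - 1)) := by
      ext t
      simp only [Finset.mem_insert, Finset.mem_Ioc]
      omega
    have hpull : ∀ t ∈ Finset.Ioc lo (hi - 1),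
        chainProd m F hi t *ᵥ w t = F hi *ᵥ (chainProd m F (hi - 1) t *ᵥ w t) := by
      intro t ht
      rw [Finset.mem_Ioc] at ht
      rw [chainProd_eq_mul_of_lt F (by omega : t < hi), mulVec_mulVec]
    have hnotMem : hi ∉ Finset.Ioc lo (hi - 1) := by
      rw [Finset.mem_Ioc]
      omega
    calc v hi = F hi *ᵥ v (hi - 1) + w hi := hv hi (Finset.right_mem_Ioc.2 hlt)
      _ = F hi *ᵥ (chainProd m F (hi - 1) lo *ᵥ v lo)
            + ∑ t ∈ Finset.Ioc lo (hi - 1), F hi *ᵥ (chainProd m F (hi - 1) t *ᵥ w t) + w hi := by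
        rw [hprev, mulVec_add, mulVec_sum]
      _ = chainProd m F hi lo *ᵥ v lo + ∑ t ∈ Finset.Ioc lo hi, chainProd m F hi t *ᵥ w t := by
        rw [hIoc, Finset.sum_insert hnotMem, Finset.sum_congr rfl hpull, chainProd_self,
          one_mulVec, chainProd_eq_mul_of_lt F hlt, mulVec_mulVec]
        abel

/-- For `hi < s` both sides vanish, because `chainProd` is then the zero matrix. -/
theorem impulse_response {F : ∀ k : ℕ, Matrix (Fin (m k)) (Fin (m (k - 1))) ℝ}
    {v w : ∀ k : ℕ, Fin (m k) → ℝ} {s hi : ℕ} (h0 : v 0 = w 0)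
    (hv : ∀ k ∈ Finset.Ioc 0 hi, v k = F k *ᵥ v (k - 1) + w k)
    (hw : ∀ k ≤ hi, k ≠ s → w k = 0) :
    v hi = chainProd m F hi s *ᵥ w s := by
  calc v hi = ∑ t ∈ Finset.Icc 0 hi, chainProd m F hi t *ᵥ w t := by
        rw [variation_of_constants hi.zero_le hv, h0]
        exact Finset.add_sum_Ioc_eq_sum_Icc (f := fun t => chainProd m F hi t *ᵥ w t) hi.zero_le
    _ = chainProd m F hi s *ᵥ w s := by
        refine Finset.sum_eq_single s (fun t ht hts => ?_) fun hs => ?_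
        · rw [hw t (Finset.mem_Icc.1 ht).2 hts, mulVec_zero]
        · have hlt : hi < s := by simpa using hs
          rw [chainProd_eq_zero_of_lt F hlt, zero_mulVec]

theorem cascade_impulse_response {F : ∀ k : ℕ, Matrix (Fin (m k)) (Fin (m (k - 1))) ℝ}
    {G : ∀ k : ℕ, Matrix (Fin (m k)) (Fin (m' (k - 1))) ℝ}
    {H : ∀ k : ℕ, Matrix (Fin (m' k)) (Fin (m' (k - 1))) ℝ}
    {x : ∀ k : ℕ, Fin (m k) → ℝ} {e w : ∀ k : ℕ, Fin (m' k) → ℝ} {s hi : ℕ}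
    (hx0 : x 0 = 0) (hx : ∀ k ∈ Finset.Ioc 0 hi, x k = F k *ᵥ x (k - 1) + G k *ᵥ e (k - 1))
    (he0 : e 0 = w 0) (he : ∀ k ∈ Finset.Ioc 0 hi, e k = H k *ᵥ e (k - 1) + w k)
    (hw : ∀ k ≤ hi, k ≠ s → w k = 0) :
    x hi = (∑ t ∈ Finset.Ioc s hi,
      chainProd m F hi t * G t * chainProd m' H (t - 1) s) *ᵥ w s := by
  have hresp : ∀ k ≤ hi, e k = chainProd m' H k s *ᵥ w s := fun k hk =>
    impulse_response he0 (fun l hl => he l (Finset.Ioc_subset_Ioc_right hk hl))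
      fun l hl => hw l (hl.trans hk)
  calc x hi = ∑ t ∈ Finset.Ioc 0 hi, chainProd m F hi t *ᵥ (G t *ᵥ e (t - 1)) := by
        rw [variation_of_constants hi.zero_le hx, hx0, mulVec_zero, zero_add]
    _ = ∑ t ∈ Finset.Ioc 0 hi,
          (chainProd m F hi t * G t * chainProd m' H (t - 1) s) *ᵥ w s := by
        refine Finset.sum_congr rfl fun t ht => ?_
        have hthi : t ≤ hi := (Finset.mem_Ioc.1 ht).2
        rw [hresp (t - 1) (by omega), mulVec_mulVec, mulVec_mulVec]
    _ = ∑ t ∈ Finset.Ioc s hi,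
          (chainProd m F hi t * G t * chainProd m' H (t - 1) s) *ᵥ w s := by
        refine (Finset.sum_subset (Finset.Ioc_subset_Ioc_left s.zero_le) fun t ht hts => ?_).symm
        have hlt : t - 1 < s := by
          simp only [Finset.mem_Ioc] at ht hts
          omega
        rw [chainProd_eq_zero_of_lt H hlt, Matrix.mul_zero, zero_mulVec]
    _ = (∑ t ∈ Finset.Ioc s hi,
          chainProd m F hi t * G t * chainProd m' H (t - 1) s) *ᵥ w s :=
        (sum_mulVec _ _ _).symm

end chainProd

section OneStage

variable {R α β γ ι : Type*} [Ring R] [Fintype α]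

theorem plant_step_eq_closedLoop_add_error [Fintype γ] (A : Matrix β α R) (B : Matrix β γ R)
    (L : Matrix γ α R) (x xhat : α → R) :
    A *ᵥ x + B *ᵥ (L *ᵥ xhat) = (A + B * L) *ᵥ x + (B * L) *ᵥ (xhat - x) := by
  rw [add_mulVec, mulVec_sub, mulVec_mulVec]
  abel

theorem kalman_step_sub_plant_step [Fintype β] [DecidableEq β] [Fintype ι]
    (A : Matrix β α R) (C : Matrix ι β R) (Km : Matrix β ι R) (x xhat : α → R)
    (b : β → R) (d : ι → R) :
    (A *ᵥ xhat + b) + Km *ᵥ ((C *ᵥ (A *ᵥ x + b) + d) - C *ᵥ (A *ᵥ xhat + b)) - (A *ᵥ x + b)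
      = ((1 - Km * C) * A) *ᵥ (xhat - x) + Km *ᵥ d := by
  simp only [← mulVec_mulVec, sub_mulVec, one_mulVec, mulVec_add, mulVec_sub]
  abel

end OneStage

theorem sum_Ico_eq_first_add_reflected_add_last {M : Type*} [AddCommMonoid M] (f : ℕ → M)
    {a b : ℕ} (h : a + 2 ≤ b) :
    ∑ t ∈ Finset.Ico a b, f t
      = f a + ∑ c ∈ Finset.Icc 1 (b - (a + 2)), f (b - c - 1) + f (b - 1) := by
  have hreflect : ∑ c ∈ Finset.Icc 1 (b - (a + 2)), f (b - c - 1)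
      = ∑ t ∈ Finset.Ico (a + 1) (b - 1), f t := by
    rw [← Finset.Ico_add_one_right_eq_Icc]
    simp only [Nat.sub_right_comm b _ 1]
    rw [Finset.sum_Ico_reflect f 1 (by omega)]
    congr 2
    omega
  have hlast : ∑ t ∈ Finset.Ico (a + 1) b, f t
      = ∑ t ∈ Finset.Ico (a + 1) (b - 1), f t + f (b - 1) := by
    rw [← Finset.sum_Ico_succ_top (by omega), Nat.sub_add_cancel (by omega)]
  rw [Finset.sum_eq_sum_Ico_succ_bot (by omega), hlast, hreflect, add_assoc]

/-- Block indices `i j ∈ {1, ..., K+1}` correspond to stages `i-1`, `j-1`.  The trailing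
Kalman-gain factor is the gain at the attacked stage `j-1` (the paper writes `K_j` in its
block-index convention). -/
theorem stmt11
    (K : ℕ) (hK : 1 ≤ K)
    (m n p : ℕ → ℕ)
    (A : ∀ k : ℕ, Matrix (Fin (m k)) (Fin (m (k - 1))) ℝ)
    (B : ∀ k : ℕ, Matrix (Fin (m k)) (Fin (p k)) ℝ)
    (C : ∀ k : ℕ, Matrix (Fin (n k)) (Fin (m k)) ℝ)
    (L : ∀ k : ℕ, Matrix (Fin (p k)) (Fin (m (k - 1))) ℝ)
    (LR : ∀ k : ℕ, Matrix (Fin (p k)) (Fin (m k)) ℝ)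
    (Km : ∀ k : ℕ, Matrix (Fin (m k)) (Fin (n k)) ℝ)
    (i j : ℕ) (hj1 : 1 ≤ j) (hij : j + 2 ≤ i) (hiK : i ≤ K + 1)
    (xr : ∀ k : ℕ, Fin (m k) → ℝ)
    (hxr : ∀ k, 1 ≤ k → k ≤ K → xr k = 0)
    (δ : ∀ k : ℕ, Fin (n k) → ℝ)
    (hδ : ∀ k, k ≤ K → k ≠ j - 1 → δ k = 0)
    (xa : ∀ k : ℕ, Fin (m k) → ℝ) (ya : ∀ k : ℕ, Fin (n k) → ℝ)
    (ua : ∀ k : ℕ, Fin (p k) → ℝ) (xhata : ∀ k : ℕ, Fin (m k) → ℝ)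
    (hy0a : ya 0 = C 0 *ᵥ xa 0)
    (hxhat0a : xhata 0 = Km 0 *ᵥ (ya 0 + δ 0))
    (hua : ∀ k, 1 ≤ k → k ≤ K → ua k = L k *ᵥ xhata (k - 1) + LR k *ᵥ xr k)
    (hxa : ∀ k, 1 ≤ k → k ≤ K → xa k = A k *ᵥ xa (k - 1) + B k *ᵥ ua k)
    (hya : ∀ k, 1 ≤ k → k ≤ K → ya k = C k *ᵥ xa k)
    (hxhata : ∀ k, 1 ≤ k → k ≤ K →
      xhata k = (A k *ᵥ xhata (k - 1) + B k *ᵥ ua k)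
        + Km k *ᵥ ((ya k + δ k) - C k *ᵥ (A k *ᵥ xhata (k - 1) + B k *ᵥ ua k)))
    (hxa0 : xa 0 = 0)
    :
    ya (i - 1) + δ (i - 1) =
      (C (i - 1) *
        ((chainProd m (fun b => A b + B b * L b) (i - 1) j * (B j * L j)
          + ∑ c ∈ Finset.Icc 1 (i - (j + 2)),
              chainProd m (fun b => A b + B b * L b) (i - 1) (i - c - 1)
                * (B (i - c - 1) * L (i - c - 1))
                * chainProd m (fun s => (1 - Km s * C s) * A s) (i - c - 1 - 1) (j - 1)
          + B (i - 1) * L (i - 1)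
              * chainProd m (fun s => (1 - Km s * C s) * A s) (i - 1 - 1) (j - 1))
          * Km (j - 1))) *ᵥ δ (j - 1) := by
  have hx : ∀ k ∈ Finset.Ioc 0 (i - 1), xa k =
      (A k + B k * L k) *ᵥ xa (k - 1) + (B k * L k) *ᵥ (xhata - xa) (k - 1) := by
    intro k hk
    obtain ⟨hk0, hki⟩ := Finset.mem_Ioc.1 hk
    rw [hxa k hk0 (by omega), hua k hk0 (by omega), hxr k hk0 (by omega), mulVec_zero, add_zero]
    exact plant_step_eq_closedLoop_add_error _ _ _ _ _
  have he : ∀ k ∈ Finset.Ioc 0 (i - 1), (xhata - xa) k =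
      ((1 - Km k * C k) * A k) *ᵥ (xhata - xa) (k - 1) + Km k *ᵥ δ k := by
    intro k hk
    obtain ⟨hk0, hki⟩ := Finset.mem_Ioc.1 hk
    rw [Pi.sub_apply, hxhata k hk0 (by omega), hya k hk0 (by omega), hxa k hk0 (by omega)]
    exact kalman_step_sub_plant_step _ _ _ _ _ _ _
  have he0 : (xhata - xa) 0 = Km 0 *ᵥ δ 0 := by simp [hxhat0a, hy0a, hxa0]
  have hw : ∀ k ≤ i - 1, k ≠ j - 1 → Km k *ᵥ δ k = 0 := fun k hk hkj => by
    rw [hδ k (by omega) hkj, mulVec_zero]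
  have hstages : Finset.Ioc (j - 1) (i - 1) = Finset.Ico j i := by
    ext t
    simp only [Finset.mem_Ioc, Finset.mem_Ico]
    omega
  rw [hδ (i - 1) (by omega) (by omega), add_zero, hya (i - 1) (by omega) (by omega),
    cascade_impulse_response hxa0 hx he0 he hw, hstages,
    sum_Ico_eq_first_add_reflected_add_last _ hij, chainProd_self, chainProd_self,
    Matrix.mul_one, Matrix.one_mul, mulVec_mulVec, mulVec_mulVec,
    Matrix.mul_assoc (C _)]
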